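/- arXiv:1403.5605 — 2 statements merged into one kernel-verified Lean document; each statement's English description precedes it below -/
import Mathlib

section
/- In every reachable state of every execution of the BWBGME algorithm, Token[i].number ≤ N+1 for every process P_i; hence all shared variables of the algorithm other than the session field are bounded. -/
/-! ## Model of the Black and White Bakery GME (BWBGME) algorithm -/

inductive Color : Type
  | black
  | white
  deriving DecidableEq

/-- The opposite color. -/
def Color.opp : Color → Color
  | .black => .white
  | .white => .black

/-- A token: a session number, a color in {black, white, ⊥} (`none` is ⊥) and a
token number. -/
structure BWTok where
  session : ℕ
  color : Option Color
  number : ℕ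
  deriving DecidableEq

def BWTok.init : BWTok := ⟨0, none, 0⟩

/-- Program counter of a process in the BWBGME algorithm.  The doorway is
`d1 s` (Token[i]:=(s,⊥,0)), `d2 s` (Choosing[i]:=true, line 4),
`d3 s` (mycolor:=GlobalColor, line 5), `scan s c j m` (the loop computing the max `m`
of the token numbers of conflicting processes with token color `c`; `j` is the next
index to read), `d4 s c m` (Token[i]:=(s,c,m), where `m` is the final mynumber) and
`d5 s c m` (Choosing[i]:=false).  The waiting room iterates, for each `j`:
`w1` (wait until Choosing[j]=false or Token[j].session=s), `wB` (the branch reading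
Token[j].color), and the busy-waits `wSame` / `wDiff`.  The exit section is the scan
`x1 s c m j` looking for an active process of the opposite color (entered only when
`m ≠ 1`), `xFlip s c m` (GlobalColor := opposite of `c`) and `x2` (Token[i]:=(0,⊥,0)). -/
inductive BWPc : Type
  | remainder
  | d1 (s : ℕ)
  | d2 (s : ℕ)
  | d3 (s : ℕ)
  | scan (s : ℕ) (c : Color) (j : ℕ) (m : ℕ)
  | d4 (s : ℕ) (c : Color) (m : ℕ)
  | d5 (s : ℕ) (c : Color) (m : ℕ)
  | w1 (s : ℕ) (c : Color) (m : ℕ) (j : ℕ)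
  | wB (s : ℕ) (c : Color) (m : ℕ) (j : ℕ)
  | wSame (s : ℕ) (c : Color) (m : ℕ) (j : ℕ)
  | wDiff (s : ℕ) (c : Color) (m : ℕ) (j : ℕ)
  | cs (s : ℕ) (c : Color) (m : ℕ)
  | x1 (s : ℕ) (c : Color) (m : ℕ) (j : ℕ)
  | xFlip (s : ℕ) (c : Color) (m : ℕ)
  | x2
  deriving DecidableEq

/-- Global state: GlobalColor, the shared arrays Token and Choosing, and the
control state of each process. -/
structure BWState (N : ℕ) where
  gcolor : Color
  token : Fin N → BWTok
  choosing : Fin N → Bool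
  pc : Fin N → BWPc

/-- Initial state; GlobalColor is initialized arbitrarily to `c0`. -/
def bwInit (N : ℕ) (c0 : Color) : BWState N :=
  { gcolor := c0, token := fun _ => BWTok.init, choosing := fun _ => false,
    pc := fun _ => BWPc.remainder }

/-- One atomic step of process `i` of the BWBGME algorithm. -/
def bwStep {N : ℕ} (st : BWState N) (i : Fin N) (st' : BWState N) : Prop :=
  match st.pc i with
  | .remainder =>
      st' = st ∨ ∃ s : ℕ, 0 < s ∧ st' = { st with pc := Function.update st.pc i (.d1 s) }
  | .d1 s =>
      st' = { st with token := Function.update st.token i ⟨s, none, 0⟩,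
                      pc := Function.update st.pc i (.d2 s) }
  | .d2 s =>
      st' = { st with choosing := Function.update st.choosing i true,
                      pc := Function.update st.pc i (.d3 s) }
  | .d3 s =>
      st' = { st with pc := Function.update st.pc i (.scan s st.gcolor 0 0) }
  | .scan s c j m =>
      if h : j < N then
        st' = { st with pc := Function.update st.pc i (.scan s c (j+1)
                  (if (st.token ⟨j, h⟩).color = some c ∧ (st.token ⟨j, h⟩).session ≠ 0 ∧
                      (st.token ⟨j, h⟩).session ≠ s
                   then max m (st.token ⟨j, h⟩).number else m)) }
      else
        st' = { st with pc := Function.update st.pc i (.d4 s c (m+1)) }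
  | .d4 s c m =>
      st' = { st with token := Function.update st.token i ⟨s, some c, m⟩,
                      pc := Function.update st.pc i (.d5 s c m) }
  | .d5 s c m =>
      st' = { st with choosing := Function.update st.choosing i false,
                      pc := Function.update st.pc i (.w1 s c m 0) }
  | .w1 s c m j =>
      if h : j < N then
        if st.choosing ⟨j, h⟩ = false ∨ (st.token ⟨j, h⟩).session = s then
          st' = { st with pc := Function.update st.pc i (.wB s c m j) }
        else st' = st
      else
        st' = { st with pc := Function.update st.pc i (.cs s c m) }
  | .wB s c m j =>
      if h : j < N then
        if (st.token ⟨j, h⟩).color = some c then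
          st' = { st with pc := Function.update st.pc i (.wSame s c m j) }
        else
          st' = { st with pc := Function.update st.pc i (.wDiff s c m j) }
      else st' = st
  | .wSame s c m j =>
      if h : j < N then
        if (m < (st.token ⟨j, h⟩).number ∨ (m = (st.token ⟨j, h⟩).number ∧ i.val < j)) ∨
            (st.token ⟨j, h⟩).color ≠ some c ∨ (st.token ⟨j, h⟩).session = 0 ∨
            (st.token ⟨j, h⟩).session = s then
          st' = { st with pc := Function.update st.pc i (.w1 s c m (j+1)) }
        else st' = st
      else st' = st
  | .wDiff s c m j =>
      if h : j < N then
        if st.gcolor ≠ c ∨ (st.token ⟨j, h⟩).color = some c ∨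
            (st.token ⟨j, h⟩).session = 0 ∨ (st.token ⟨j, h⟩).session = s then
          st' = { st with pc := Function.update st.pc i (.w1 s c m (j+1)) }
        else st' = st
      else st' = st
  | .cs s c m =>
      st' = st ∨
        st' = { st with pc :=
                  Function.update st.pc i (if m = 1 then BWPc.x2 else BWPc.x1 s c m 0) }
  | .x1 s c m j =>
      if h : j < N then
        if (st.token ⟨j, h⟩).session ≠ 0 ∧ (st.token ⟨j, h⟩).color = some c.opp then
          st' = { st with pc := Function.update st.pc i .x2 }
        else
          st' = { st with pc := Function.update st.pc i (.x1 s c m (j+1)) }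
      else
        st' = { st with pc := Function.update st.pc i (.xFlip s c m) }
  | .xFlip _ c _ =>
      st' = { st with gcolor := c.opp, pc := Function.update st.pc i .x2 }
  | .x2 =>
      st' = { st with token := Function.update st.token i BWTok.init,
                      pc := Function.update st.pc i .remainder }

/-- An execution of the BWBGME algorithm: an interleaving of atomic steps from an
initial state (with arbitrary GlobalColor) in which every process outside its
remainder section eventually takes its next step. -/
structure BWExec (N : ℕ) where
  state : ℕ → BWState N
  sched : ℕ → Fin N
  init : ∃ c0, state 0 = bwInit N c0
  step : ∀ n, bwStep (state n) (sched n) (state (n + 1))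
  fair : ∀ (i : Fin N) (n : ℕ), (state n).pc i ≠ BWPc.remainder →
           ∃ m, n ≤ m ∧ sched m = i

/-- Process `i` is in the critical section. -/
def bwInCS {N : ℕ} (st : BWState N) (i : Fin N) : Prop :=
  ∃ s c m, st.pc i = BWPc.cs s c m

/-- Process `i` is in the entry section (doorway or waiting room). -/
def bwInEntry {N : ℕ} (st : BWState N) (i : Fin N) : Prop :=
  match st.pc i with
  | .remainder => False
  | .cs _ _ _ => False
  | .x1 _ _ _ _ => False
  | .xFlip _ _ _ => False
  | .x2 => False
  | _ => True

/-- At step `n`, process `i` leaves the remainder and enters the doorway,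
requesting session `s`. -/
def bwEntersDoorway {N : ℕ} (e : BWExec N) (i : Fin N) (s : ℕ) (n : ℕ) : Prop :=
  (e.state n).pc i = BWPc.remainder ∧ (e.state (n+1)).pc i = BWPc.d1 s

/-- At step `n`, process `i` completes its doorway (executes Choosing[i]:=false),
having requested session `s` and chosen token color `c` and token number `m`. -/
def bwCompletesDoorway {N : ℕ} (e : BWExec N) (i : Fin N) (s : ℕ) (c : Color) (m : ℕ)
    (n : ℕ) : Prop :=
  (e.state n).pc i = BWPc.d5 s c m ∧ (e.state (n+1)).pc i = BWPc.w1 s c m 0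

/-- At step `n`, process `i` executes line 5, reading GlobalColor = `c`
(its invocation requests session `s`). -/
def bwLine5 {N : ℕ} (e : BWExec N) (i : Fin N) (s : ℕ) (c : Color) (n : ℕ) : Prop :=
  (e.state n).pc i = BWPc.d3 s ∧ (e.state (n+1)).pc i = BWPc.scan s c 0 0

/-- At step `n`, process `i` executes line 4 (Choosing[i]:=true). -/
def bwLine4 {N : ℕ} (e : BWExec N) (i : Fin N) (s : ℕ) (n : ℕ) : Prop :=
  (e.state n).pc i = BWPc.d2 s ∧ (e.state (n+1)).pc i = BWPc.d3 s

/-- At step `n`, process `i` enters the critical section. -/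
def bwEntersCS {N : ℕ} (e : BWExec N) (i : Fin N) (n : ℕ) : Prop :=
  ¬ bwInCS (e.state n) i ∧ bwInCS (e.state (n+1)) i

/-- At step `n`, process `i` finishes (leaves) the critical section. -/
def bwLeavesCS {N : ℕ} (e : BWExec N) (i : Fin N) (n : ℕ) : Prop :=
  bwInCS (e.state n) i ∧ ¬ bwInCS (e.state (n+1)) i

/-- At step `n`, process `i` completes its exit section
(executes Token[i]:=(0,⊥,0) and returns to the remainder section). -/
def bwCompletesExit {N : ℕ} (e : BWExec N) (i : Fin N) (n : ℕ) : Prop :=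
  (e.state n).pc i = BWPc.x2 ∧ (e.state (n+1)).pc i = BWPc.remainder

/-- Process `i` does not pass through the remainder section during `(a, b]`
(so times `a` and `b` belong to the same invocation of `i`). -/
def bwActiveThrough {N : ℕ} (e : BWExec N) (i : Fin N) (a b : ℕ) : Prop :=
  ∀ k, a < k → k ≤ b → (e.state k).pc i ≠ BWPc.remainder

/-- GlobalColor is flipped at step `n`: the step is a write that changes its value. -/
def bwFlipAt {N : ℕ} (e : BWExec N) (n : ℕ) : Prop :=
  (e.state (n+1)).gcolor ≠ (e.state n).gcolor

/-- The color read in line 5 by a process that has not yet published it. -/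
def BWPc.scanColor : BWPc → Option Color
  | .scan _ c _ _ => some c
  | .d4 _ c _ => some c
  | _ => none

/-- The program counter lies between lines 4 and the end of the doorway. -/
def BWPc.isChoosing : BWPc → Bool
  | .d3 _ => true
  | .scan _ _ _ _ => true
  | .d4 _ _ _ => true
  | .d5 _ _ _ => true
  | _ => false

/-- The waiting-room iteration for process number `k` is finished. -/
def BWPc.Passed (k : ℕ) : BWPc → Prop
  | .w1 _ _ _ j => k < j
  | .wB _ _ _ j => k < j
  | .wSame _ _ _ j => k < j
  | .wDiff _ _ _ j => k < j
  | .cs _ _ _ => True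
  | .x1 _ _ _ _ => True
  | .xFlip _ _ _ => True
  | .x2 => True
  | _ => False

/-- The process has tested `Choosing[k]` but not finished the iteration for `k`. -/
def BWPc.Examining (k : ℕ) : BWPc → Prop
  | .wB _ _ _ j => k = j
  | .wSame _ _ _ j => k = j
  | .wDiff _ _ _ j => k = j
  | _ => False

def BWPc.InWSame (k : ℕ) : BWPc → Prop
  | .wSame _ _ _ j => k = j
  | _ => False

def BWPc.InWDiff (k : ℕ) : BWPc → Prop
  | .wDiff _ _ _ j => k = j
  | _ => False

/-- The largest conflicting token number a process has seen so far in its doorway. -/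
def BWPc.level (t : BWTok) : BWPc → ℕ
  | .scan _ _ _ m => m
  | .d4 _ _ m => m - 1
  | _ => t.number - 1

/-- The value of `Token[i]` determined by the program counter of process `i`. -/
def BWPc.TokenOk (t : BWTok) : BWPc → Prop
  | .remainder => t = BWTok.init
  | .d1 s => t = BWTok.init ∧ 0 < s
  | .d2 s => t = ⟨s, none, 0⟩ ∧ 0 < s
  | .d3 s => t = ⟨s, none, 0⟩ ∧ 0 < s
  | .scan s _ _ _ => t = ⟨s, none, 0⟩ ∧ 0 < s
  | .d4 s _ m => t = ⟨s, none, 0⟩ ∧ 0 < s ∧ 1 ≤ m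
  | .d5 s c m => t = ⟨s, some c, m⟩ ∧ 0 < s ∧ 1 ≤ m
  | .w1 s c m _ => t = ⟨s, some c, m⟩ ∧ 0 < s ∧ 1 ≤ m
  | .wB s c m _ => t = ⟨s, some c, m⟩ ∧ 0 < s ∧ 1 ≤ m
  | .wSame s c m _ => t = ⟨s, some c, m⟩ ∧ 0 < s ∧ 1 ≤ m
  | .wDiff s c m _ => t = ⟨s, some c, m⟩ ∧ 0 < s ∧ 1 ≤ m
  | .cs s c m => t = ⟨s, some c, m⟩ ∧ 0 < s ∧ 1 ≤ m
  | .x1 s c m _ => t = ⟨s, some c, m⟩ ∧ 0 < s ∧ 2 ≤ m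
  | .xFlip s c m => t = ⟨s, some c, m⟩ ∧ 0 < s ∧ 2 ≤ m
  | .x2 => ∃ s c m, t = ⟨s, some c, m⟩ ∧ 0 < s ∧ 1 ≤ m

theorem Color.opp_ne (c : Color) : c.opp ≠ c := by cases c <;> simp [Color.opp]

theorem Color.opp_opp (c : Color) : c.opp.opp = c := by cases c <;> rfl

theorem Color.eq_opp_of_ne {c d : Color} (h : c ≠ d) : c = d.opp := by
  cases c <;> cases d <;> simp_all [Color.opp]

section

variable {N : ℕ}

/-- The state-changing atomic steps of process `i`, given by the new values of `pc i`,
`Token[i]`, `Choosing[i]` and GlobalColor. -/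
inductive BWMove (st : BWState N) (i : Fin N) : BWPc → BWTok → Bool → Color → Prop
  | start {s} (hp : st.pc i = .remainder) (hs : 0 < s) :
      BWMove st i (.d1 s) (st.token i) (st.choosing i) st.gcolor
  | announce {s} (hp : st.pc i = .d1 s) :
      BWMove st i (.d2 s) ⟨s, none, 0⟩ (st.choosing i) st.gcolor
  | raise {s} (hp : st.pc i = .d2 s) :
      BWMove st i (.d3 s) (st.token i) true st.gcolor
  | readColor {s} (hp : st.pc i = .d3 s) :
      BWMove st i (.scan s st.gcolor 0 0) (st.token i) (st.choosing i) st.gcolor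
  | scanTake {s c m} {k : Fin N} (hp : st.pc i = .scan s c k m)
      (hc : (st.token k).color = some c) (h0 : (st.token k).session ≠ 0)
      (hs : (st.token k).session ≠ s) :
      BWMove st i (.scan s c (k + 1) (max m (st.token k).number)) (st.token i)
        (st.choosing i) st.gcolor
  | scanSkip {s c m} {k : Fin N} (hp : st.pc i = .scan s c k m)
      (hk : ¬((st.token k).color = some c ∧ (st.token k).session ≠ 0 ∧
        (st.token k).session ≠ s)) :
      BWMove st i (.scan s c (k + 1) m) (st.token i) (st.choosing i) st.gcolor
  | scanEnd {s c j m} (hp : st.pc i = .scan s c j m) (hj : N ≤ j) :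
      BWMove st i (.d4 s c (m + 1)) (st.token i) (st.choosing i) st.gcolor
  | publish {s c m} (hp : st.pc i = .d4 s c m) :
      BWMove st i (.d5 s c m) ⟨s, some c, m⟩ (st.choosing i) st.gcolor
  | lower {s c m} (hp : st.pc i = .d5 s c m) :
      BWMove st i (.w1 s c m 0) (st.token i) false st.gcolor
  | testChoosing {s c m} {k : Fin N} (hp : st.pc i = .w1 s c m k)
      (hk : st.choosing k = false ∨ (st.token k).session = s) :
      BWMove st i (.wB s c m k) (st.token i) (st.choosing i) st.gcolor
  | enter {s c m j} (hp : st.pc i = .w1 s c m j) (hj : N ≤ j) :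
      BWMove st i (.cs s c m) (st.token i) (st.choosing i) st.gcolor
  | branchSame {s c m} {k : Fin N} (hp : st.pc i = .wB s c m k)
      (hk : (st.token k).color = some c) :
      BWMove st i (.wSame s c m k) (st.token i) (st.choosing i) st.gcolor
  | branchDiff {s c m} {k : Fin N} (hp : st.pc i = .wB s c m k)
      (hk : (st.token k).color ≠ some c) :
      BWMove st i (.wDiff s c m k) (st.token i) (st.choosing i) st.gcolor
  | passSame {s c m} {k : Fin N} (hp : st.pc i = .wSame s c m k)
      (hk : m ≤ (st.token k).number ∨ (st.token k).color ≠ some c ∨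
        (st.token k).session = 0 ∨ (st.token k).session = s) :
      BWMove st i (.w1 s c m (k + 1)) (st.token i) (st.choosing i) st.gcolor
  | passDiff {s c m} {k : Fin N} (hp : st.pc i = .wDiff s c m k)
      (hk : st.gcolor ≠ c ∨ (st.token k).color = some c ∨
        (st.token k).session = 0 ∨ (st.token k).session = s) :
      BWMove st i (.w1 s c m (k + 1)) (st.token i) (st.choosing i) st.gcolor
  | leaveOne {s c} (hp : st.pc i = .cs s c 1) :
      BWMove st i .x2 (st.token i) (st.choosing i) st.gcolor
  | leave {s c m} (hp : st.pc i = .cs s c m) (hm : m ≠ 1) :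
      BWMove st i (.x1 s c m 0) (st.token i) (st.choosing i) st.gcolor
  | exitFound {s c m} {k : Fin N} (hp : st.pc i = .x1 s c m k)
      (hk : (st.token k).color = some c.opp) :
      BWMove st i .x2 (st.token i) (st.choosing i) st.gcolor
  | exitNext {s c m} {k : Fin N} (hp : st.pc i = .x1 s c m k) :
      BWMove st i (.x1 s c m (k + 1)) (st.token i) (st.choosing i) st.gcolor
  | exitEnd {s c m j} (hp : st.pc i = .x1 s c m j) :
      BWMove st i (.xFlip s c m) (st.token i) (st.choosing i) st.gcolor
  | flip {s c m} (hp : st.pc i = .xFlip s c m) :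
      BWMove st i .x2 (st.token i) (st.choosing i) c.opp
  | finish (hp : st.pc i = .x2) :
      BWMove st i .remainder BWTok.init (st.choosing i) st.gcolor

/-- `st'` arises from `st` by a state-changing atomic step of process `i`. -/
structure BWTrans (st : BWState N) (i : Fin N) (st' : BWState N) : Prop where
  pc_ne : ∀ k, k ≠ i → st'.pc k = st.pc k
  token_ne : ∀ k, k ≠ i → st'.token k = st.token k
  choosing_ne : ∀ k, k ≠ i → st'.choosing k = st.choosing k
  move : BWMove st i (st'.pc i) (st'.token i) (st'.choosing i) st'.gcolor

theorem BWMove.trans {st : BWState N} {i : Fin N} {p : BWPc} {t : BWTok} {b : Bool}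
    {g : Color} (h : BWMove st i p t b g) :
    BWTrans st i ⟨g, Function.update st.token i t, Function.update st.choosing i b,
      Function.update st.pc i p⟩ :=
  ⟨fun k hk => by simp [hk], fun k hk => by simp [hk], fun k hk => by simp [hk],
    by simpa using h⟩

theorem BWMove.trans_pc {st : BWState N} {i : Fin N} {p : BWPc}
    (h : BWMove st i p (st.token i) (st.choosing i) st.gcolor) :
    BWTrans st i { st with pc := Function.update st.pc i p } := by
  simpa using h.trans

theorem bwStep.eq_or_trans {st : BWState N} {i : Fin N} {st' : BWState N}
    (h : bwStep st i st') : st' = st ∨ BWTrans st i st' := by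
  unfold bwStep at h
  split at h
  case h_1 hp =>
    obtain h | ⟨s, hs, rfl⟩ := h
    · exact .inl h
    · exact .inr (BWMove.start hp hs).trans_pc
  case h_2 hp => subst h; right; simpa using (BWMove.announce hp).trans
  case h_3 hp => subst h; right; simpa using (BWMove.raise hp).trans
  case h_4 hp => subst h; exact .inr (BWMove.readColor hp).trans_pc
  case h_5 s c j m hp =>
    split at h
    · rename_i hj
      subst h
      right
      split
      · rename_i hk
        exact (BWMove.scanTake (k := ⟨j, hj⟩) hp hk.1 hk.2.1 hk.2.2).trans_pc
      · rename_i hk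
        exact (BWMove.scanSkip (k := ⟨j, hj⟩) hp hk).trans_pc
    · subst h
      exact .inr (BWMove.scanEnd hp (by omega)).trans_pc
  case h_6 hp => subst h; right; simpa using (BWMove.publish hp).trans
  case h_7 hp => subst h; right; simpa using (BWMove.lower hp).trans
  case h_8 s c m j hp =>
    split at h
    · rename_i hj
      split at h
      · subst h
        exact .inr (BWMove.testChoosing (k := ⟨j, hj⟩) hp ‹_›).trans_pc
      · exact .inl h
    · subst h
      exact .inr (BWMove.enter hp (by omega)).trans_pc
  case h_9 s c m j hp =>
    split at h
    · rename_i hj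
      split at h
      · subst h
        exact .inr (BWMove.branchSame (k := ⟨j, hj⟩) hp ‹_›).trans_pc
      · subst h
        exact .inr (BWMove.branchDiff (k := ⟨j, hj⟩) hp ‹_›).trans_pc
    · exact .inl h
  case h_10 s c m j hp =>
    split at h
    · rename_i hj
      split at h
      · rename_i hk
        subst h
        refine .inr (BWMove.passSame (k := ⟨j, hj⟩) hp ?_).trans_pc
        exact hk.imp_left fun h => h.elim le_of_lt fun h => h.1.le
      · exact .inl h
    · exact .inl h
  case h_11 s c m j hp =>
    split at h
    · rename_i hj
      split at h
      · subst h
        exact .inr (BWMove.passDiff (k := ⟨j, hj⟩) hp ‹_›).trans_pc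
      · exact .inl h
    · exact .inl h
  case h_12 s c m hp =>
    obtain h | h := h
    · exact .inl h
    · subst h
      right
      split
      · rename_i hm
        subst hm
        exact (BWMove.leaveOne hp).trans_pc
      · exact (BWMove.leave hp ‹_›).trans_pc
  case h_13 s c m j hp =>
    split at h
    · rename_i hj
      split at h
      · rename_i hk
        subst h
        exact .inr (BWMove.exitFound (k := ⟨j, hj⟩) hp hk.2).trans_pc
      · subst h
        exact .inr (BWMove.exitNext (k := ⟨j, hj⟩) hp).trans_pc
    · subst h
      exact .inr (BWMove.exitEnd hp).trans_pc
  case h_14 hp => subst h; right; simpa using (BWMove.flip hp).trans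
  case h_15 hp => subst h; right; simpa using (BWMove.finish hp).trans

/-- Process `j` has color `c`, either published in its token or read in its doorway. -/
def BWState.HasColor (st : BWState N) (j : Fin N) (c : Color) : Prop :=
  (st.pc j).scanColor = some c ∨ (st.token j).color = some c

/-- A process whose color differs from GlobalColor blocks every conflicting process whose
color is GlobalColor. -/
def BWState.OppositeBlocks (st : BWState N) : Prop :=
  ∀ i j, (st.token i).color = some st.gcolor → st.HasColor j st.gcolor.opp →
    (st.token i).session ≠ (st.token j).session →
    ¬ (st.pc i).Passed j ∧ ¬ (st.pc i).InWSame j ∧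
      ((st.pc i).Examining j → (st.pc j).isChoosing = false)

/-- Processes `i` and `j` conflict, and `i` has `Token[i].color = c`. -/
def BWState.Rival (st : BWState N) (i j : Fin N) (c : Color) : Prop :=
  (st.token i).color = some c ∧ (st.token i).session ≠ (st.token j).session

/-- If `i` is ahead of a conflicting process `j` of the same color, then `j` does not get a
smaller number than `i`. -/
def BWState.Ordered (st : BWState N) : Prop :=
  ∀ i j c, st.Rival i j c →
    ((st.pc i).Passed j ∨ (st.pc i).Examining j →
      (∀ s k m, st.pc j = .scan s c k m → i < k → (st.token i).number ≤ m) ∧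
      (∀ s m, st.pc j = .d4 s c m → (st.token i).number ≤ m) ∧
      (∀ s m, st.pc j = .d5 s c m → (st.token i).number ≤ m)) ∧
    ((st.pc i).Passed j ∨ (st.pc i).InWDiff j → (st.token j).color = some c →
      (st.token i).number ≤ (st.token j).number)

/-- While a process of the opposite color is active, any process of the current color in the
same session with positive level owes its level to a conflicting published token. -/
def BWState.Witnessed (st : BWState N) : Prop :=
  ∀ i j, st.HasColor i st.gcolor → st.HasColor j st.gcolor.opp →
    (st.token i).session = (st.token j).session → 1 ≤ (st.pc i).level (st.token i) →
    ∃ z, st.Rival z i st.gcolor ∧ (st.token z).number ≤ (st.pc i).level (st.token i)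

/-- Processes completing the exit section with the current color have number one. -/
def BWState.ExitOne (st : BWState N) : Prop :=
  ∀ i, st.pc i = .x2 → (st.token i).color = some st.gcolor → (st.token i).number = 1

/-- The token numbers of the current color have no gaps above one. -/
def BWState.Gapless (st : BWState N) : Prop :=
  ∀ i u, st.HasColor i st.gcolor → 2 ≤ u → u ≤ (st.pc i).level (st.token i) →
    ∃ z, (st.token z).color = some st.gcolor ∧ (st.token z).number = u

/-- The processes that have read the color `c` and not yet published it. -/
def BWState.scanners (st : BWState N) (c : Color) : Finset (Fin N) :=
  Finset.univ.filter fun i => (st.pc i).scanColor = some c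

/-- The numbers of color `c` stay at most `N + 1` even if each scanner of color `c`
adds one. -/
def BWState.Bounded (st : BWState N) (c : Color) : Prop :=
  (∀ i, (st.token i).color = some c → (st.token i).number + (st.scanners c).card ≤ N + 1) ∧
  ∀ i, (st.pc i).scanColor = some c →
    (st.pc i).level (st.token i) + (st.scanners c).card ≤ N + 1

/-- The tokens and the `Choosing` bits agree with the program counters. -/
structure BWState.Consistent (st : BWState N) : Prop where
  token : ∀ i, (st.pc i).TokenOk (st.token i)
  choosing : ∀ i, st.choosing i = (st.pc i).isChoosing

structure BWState.Invariant (st : BWState N) : Prop where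
  consistent : st.Consistent
  oppositeBlocks : st.OppositeBlocks
  ordered : st.Ordered
  witnessed : st.Witnessed
  exitOne : st.ExitOne
  gapless : st.Gapless
  bounded : st.Bounded st.gcolor.opp

theorem BWTrans.consistent {st st' : BWState N} {i : Fin N} (h : BWTrans st i st')
    (hc : st.Consistent) : st'.Consistent := by
  obtain ⟨hp, ht, hch, hm⟩ := h
  have hti := hc.token i
  have hci := hc.choosing i
  suffices (st'.pc i).TokenOk (st'.token i) ∧ st'.choosing i = (st'.pc i).isChoosing by
    constructor
    · intro k
      by_cases hk : k = i
      · exact hk ▸ this.1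
      · rw [hp k hk, ht k hk]; exact hc.token k
    · intro k
      by_cases hk : k = i
      · exact hk ▸ this.2
      · rw [hp k hk, hch k hk]; exact hc.choosing k
  generalize st'.pc i = p, st'.token i = t, st'.choosing i = b, st'.gcolor = g at hm
  cases hm <;> rename_i hpc <;> try simp_all [BWPc.TokenOk, BWPc.isChoosing]
  all_goals omega

namespace BWMove

variable {st : BWState N} {i : Fin N} {p : BWPc} {t : BWTok} {b : Bool} {g : Color}

theorem passed_inv (h : BWMove st i p t b g) (hc : st.Consistent) {k : Fin N}
    (hk : p.Passed k) :
    t = st.token i ∧ ((st.pc i).Passed k ∨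
      (st.pc i).InWSame k ∧ ((st.token i).number ≤ (st.token k).number ∨
        (st.token k).color ≠ (st.token i).color ∨ (st.token k).session = 0 ∨
        (st.token k).session = (st.token i).session) ∨
      (st.pc i).InWDiff k ∧ ((st.token i).color ≠ some st.gcolor ∨
        (st.token k).color = (st.token i).color ∨ (st.token k).session = 0 ∨
        (st.token k).session = (st.token i).session)) := by
  have hti := hc.token i
  cases h <;> rename_i hp <;>
    simp_all only [BWPc.TokenOk, BWPc.Passed, BWPc.InWSame, BWPc.InWDiff]
  all_goals grind

theorem examining_inv (h : BWMove st i p t b g) (hc : st.Consistent) {k : Fin N}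
    (hk : p.Examining k) :
    t = st.token i ∧ ((st.pc i).Examining k ∨ (st.pc k).isChoosing = false ∨
      (st.token k).session = (st.token i).session) := by
  have hti := hc.token i
  have hck := hc.choosing k
  cases h <;> rename_i hp <;> simp_all only [BWPc.TokenOk, BWPc.Examining]
  all_goals grind

theorem inWDiff_inv (h : BWMove st i p t b g) (hc : st.Consistent) {k : Fin N}
    (hk : p.InWDiff k) :
    t = st.token i ∧ ((st.pc i).InWDiff k ∨
      (st.pc i).Examining k ∧ (st.token k).color ≠ (st.token i).color) := by
  have hti := hc.token i
  cases h <;> rename_i hp <;> simp_all only [BWPc.TokenOk, BWPc.InWDiff, BWPc.Examining]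
  all_goals grind

theorem inWSame_inv (h : BWMove st i p t b g) (hc : st.Consistent) {k : Fin N}
    (hk : p.InWSame k) :
    t = st.token i ∧ ((st.pc i).InWSame k ∨ (st.token k).color = (st.token i).color) := by
  have hti := hc.token i
  cases h <;> rename_i hp <;> simp_all only [BWPc.TokenOk, BWPc.InWSame]
  all_goals grind

theorem scan_inv {s c j m} (h : BWMove st i (.scan s c j m) t b g) :
    t = st.token i ∧ g = st.gcolor ∧
      (st.pc i = .d3 s ∧ c = st.gcolor ∧ j = 0 ∧ m = 0 ∨
       ∃ (z : Fin N) (m' : ℕ), st.pc i = .scan s c z m' ∧ j = z + 1 ∧ m' ≤ m ∧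
        ((st.token z).color = some c → (st.token z).session ≠ 0 →
          (st.token z).session ≠ s → (st.token z).number ≤ m) ∧
        (m = m' ∨ (st.token z).color = some c ∧ (st.token z).session ≠ s ∧
          (st.token z).number = m)) := by
  cases h <;> grind

theorem d4_inv {s c m} (h : BWMove st i (.d4 s c m) t b g) :
    t = st.token i ∧ g = st.gcolor ∧
      ∃ j m', st.pc i = .scan s c j m' ∧ N ≤ j ∧ m = m' + 1 := by
  cases h
  grind

theorem color_inv {c} (h : BWMove st i p t b g) (ht : t.color = some c) :
    t = st.token i ∨ ∃ s m, st.pc i = .d4 s c m ∧ p = .d5 s c m ∧ t = ⟨s, some c, m⟩ := by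
  cases h <;> simp_all [BWTok.init]

theorem d5_inv {s c m} (h : BWMove st i (.d5 s c m) t b g) :
    st.pc i = .d4 s c m ∧ t = ⟨s, some c, m⟩ ∧ g = st.gcolor := by
  cases h
  grind

theorem gcolor_inv (h : BWMove st i p t b g) :
    g = st.gcolor ∨ ∃ s c m, st.pc i = .xFlip s c m ∧ g = c.opp ∧ p = .x2 ∧ t = st.token i := by
  cases h <;> simp_all

end BWMove

namespace BWPc

theorem InWDiff.examining {p : BWPc} {k : ℕ} (h : p.InWDiff k) : p.Examining k := by
  cases p <;> simp_all [InWDiff, Examining]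

theorem InWSame.examining {p : BWPc} {k : ℕ} (h : p.InWSame k) : p.Examining k := by
  cases p <;> simp_all [InWSame, Examining]

theorem TokenOk.number_pos {p : BWPc} {t : BWTok} {c : Color} (h : p.TokenOk t)
    (hc : t.color = some c) : 0 < t.number ∧ 0 < t.session ∧ p.scanColor = none := by
  cases p <;> simp only [TokenOk] at h <;> grind [scanColor, BWTok.init]

theorem TokenOk.session_pos {p : BWPc} {t : BWTok} {c : Color} (h : p.TokenOk t)
    (hc : p.scanColor = some c) : 0 < t.session ∧ t.color = none := by
  cases p <;> simp_all [TokenOk, scanColor]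

end BWPc

theorem BWTrans.ordered {st st' : BWState N} {i : Fin N} (h : BWTrans st i st')
    (hc : st.Consistent) (ho : st.Ordered) : st'.Ordered := by
  have hc' := h.consistent hc
  obtain ⟨hp, ht, hch, hm⟩ := h
  intro a b c hr
  have hab : a ≠ b := by
    rintro rfl
    exact hr.2 rfl
  obtain ⟨hac, hs⟩ := hr
  have htb := hc.token b
  have hta' := hc'.token a
  have hob := ho a b c
  by_cases ha : a = i
  · subst ha
    rw [hp b hab.symm]
    rw [ht b hab.symm] at hs ⊢
    have hpass := hm.passed_inv hc (k := b)
    have hex := hm.examining_inv hc (k := b)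
    have hdiff := hm.inWDiff_inv hc (k := b)
    have hsame := fun h => BWPc.InWSame.examining (p := st.pc a) (k := b) h
    have hdiffex := fun h => BWPc.InWDiff.examining (p := st.pc a) (k := b) h
    refine ⟨fun hpe => ?_, fun hpe hbc => ?_⟩
    · have : st'.token a = st.token a ∧ ((st.pc a).Passed b ∨ (st.pc a).Examining b ∨
          (st.pc b).isChoosing = false) := by grind
      obtain ⟨hta, this⟩ := this
      rw [hta] at hac hs ⊢
      obtain h | h | h := this
      · exact (hob ⟨hac, hs⟩).1 (.inl h)
      · exact (hob ⟨hac, hs⟩).1 (.inr h)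
      · refine ⟨fun s k m h' => ?_, fun s m h' => ?_, fun s m h' => ?_⟩ <;>
          simp [h', BWPc.isChoosing] at h
    · have := htb.number_pos hbc
      have hta : st'.token a = st.token a := by grind
      rw [hta] at hac hs ⊢
      have := (hob ⟨hac, hs⟩).2
      grind
  · rw [hp a ha] at *
    rw [ht a ha] at *
    by_cases hb : b = i
    · subst hb
      have hpos := hta'.number_pos hac
      refine ⟨fun hpe => ⟨fun s k m hpb hk => ?_, fun s m hpb => ?_, fun s m hpb => ?_⟩,
        fun hpe hbc => ?_⟩
      · rw [hpb] at hm
        obtain ⟨htb, -, ⟨-, -, rfl, -⟩ | ⟨z, m', hpb', rfl, hm', hz, -⟩⟩ := hm.scan_inv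
        · omega
        · rw [htb] at hs
          have := (hob ⟨hac, hs⟩).1 hpe
          by_cases hza : z = a
          · subst hza
            have hsb : (st.token b).session = s := by
              have := hc.token b
              rw [hpb'] at this
              simp_all [BWPc.TokenOk]
            exact hz hac (by omega) (hsb ▸ hs)
          · have hne : (z : ℕ) ≠ a := fun h => hza (Fin.ext h)
            exact (this.1 s z m' hpb' (by omega)).trans hm'
      · rw [hpb] at hm
        obtain ⟨htb, -, j, m', hpb', hj, rfl⟩ := hm.d4_inv
        rw [htb] at hs
        have := ((hob ⟨hac, hs⟩).1 hpe).1 s j m' hpb' (a.isLt.trans_le hj)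
        omega
      · rw [hpb] at hm
        obtain ⟨hpb', htb', -⟩ := hm.d5_inv
        have hsb := hc.token b
        rw [hpb'] at hsb
        refine ((hob ⟨hac, ?_⟩).1 hpe).2.1 s m hpb'
        simp_all [BWPc.TokenOk]
      · obtain htb | ⟨s, m, hpb', hpb, htb⟩ := hm.color_inv hbc
        · rw [htb] at hs hbc ⊢
          exact (hob ⟨hac, hs⟩).2 hpe hbc
        · have hsb := hc.token b
          rw [hpb'] at hsb
          have := (hob ⟨hac, by simp_all [BWPc.TokenOk]⟩).1
            (hpe.imp_right BWPc.InWDiff.examining)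
          rw [htb]
          exact this.2.1 s m hpb'
    · rw [hp b hb] at *
      rw [ht b hb] at *
      exact hob ⟨hac, hs⟩

theorem BWPc.level_eq {p : BWPc} {t : BWTok} (h : p.scanColor = none) :
    p.level t = t.number - 1 := by
  cases p <;> simp_all [BWPc.scanColor, BWPc.level]

theorem BWTrans.of_hasColor_opp {st st' : BWState N} {i j : Fin N} (h : BWTrans st i st')
    (hc : st.Consistent) (hg : st'.gcolor = st.gcolor) (hj : st'.HasColor j st.gcolor.opp) :
    st.HasColor j st.gcolor.opp ∧ (st'.token j).session = (st.token j).session ∧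
      ((st.pc j).isChoosing = false → (st'.pc j).isChoosing = false) := by
  obtain ⟨hp, ht, hch, hm⟩ := h
  have htj := hc.token j
  have hne := st.gcolor.opp_ne
  by_cases hji : j = i
  · subst hji
    unfold BWState.HasColor at hj ⊢
    generalize st'.pc j = p, st'.token j = t, st'.choosing j = b, st'.gcolor = g at hm hj hg
    cases hm <;>
      grind [BWPc.TokenOk, BWPc.isChoosing, BWPc.scanColor, BWTok.init]
  · simp_all [BWState.HasColor]

theorem BWTrans.oppositeBlocks {st st' : BWState N} {i : Fin N} (h : BWTrans st i st')
    (hc : st.Consistent) (hg : st'.gcolor = st.gcolor) (ho : st.OppositeBlocks) :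
    st'.OppositeBlocks := by
  intro a b hac hbc hs
  rw [hg] at hac hbc
  have hne := st.gcolor.opp_ne
  obtain ⟨hbc', hbs, hbch⟩ := h.of_hasColor_opp hc hg hbc
  obtain ⟨hp, ht, hch, hm⟩ := h
  rw [hbs] at hs
  have hob := ho a b
  have htb := hc.token b
  have hbcol : (st.token b).color ≠ some st.gcolor := by
    rcases hbc' with h | h
    · simp [(htb.session_pos h).2]
    · simpa [h] using hne
  have hbpos : (st.token b).session ≠ 0 := by
    rcases hbc' with h | h
    · exact (htb.session_pos h).1.ne'
    · exact (htb.number_pos h).2.1.ne'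
  have hab : a ≠ b := by
    rintro rfl
    exact hs hbs
  by_cases ha : a = i
  · subst ha
    rw [hp b hab.symm]
    have hpass := hm.passed_inv hc (k := b)
    have hex := hm.examining_inv hc (k := b)
    have hsame := hm.inWSame_inv hc (k := b)
    grind
  · rw [hp a ha]
    rw [ht a ha] at hac hs
    have := hob hac hbc' hs
    exact ⟨this.1, this.2.1, fun h => hbch (this.2.2 h)⟩

/-- A process with current color and number at least two that has passed the whole waiting
room excludes all processes of the opposite color. -/
theorem BWState.Invariant.not_hasColor_opp {st : BWState N} (h : st.Invariant) {i : Fin N}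
    (hp : ∀ k : Fin N, (st.pc i).Passed k) (hi : (st.token i).color = some st.gcolor)
    (hn : 2 ≤ (st.token i).number) (j : Fin N) : ¬ st.HasColor j st.gcolor.opp := by
  intro hj
  have hs : (st.token i).session = (st.token j).session := by
    by_contra hs
    exact (h.oppositeBlocks i j hi hj hs).1 (hp j)
  have hl := BWPc.level_eq (t := st.token i) ((h.consistent.token i).number_pos hi).2.2
  obtain ⟨z, hz, hzn⟩ := h.witnessed i j (.inr hi) hj hs (by omega)
  have := (h.ordered i z _ ⟨hi, hz.2.symm⟩).2 (.inl (hp z)) hz.1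
  omega

theorem BWTrans.exitOne {st st' : BWState N} {i : Fin N} (h : BWTrans st i st')
    (hI : st.Invariant) (hg : st'.gcolor = st.gcolor) : st'.ExitOne := by
  intro a hpa hac
  obtain ⟨hp, ht, hch, hm⟩ := h
  have hex := hI.exitOne a
  have hA := hI.not_hasColor_opp (i := a)
  have hta := hI.consistent.token a
  rw [hg] at hac
  by_cases ha : a = i
  · subst ha
    rw [hpa] at hm
    generalize st'.token a = t, st'.choosing a = b, st'.gcolor = g at hm hac hg
    have hne := st.gcolor.opp_ne
    cases hm with
    | leaveOne hpc => simp_all [BWPc.TokenOk]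
    | @exitFound s c m k hpc hk =>
      rw [hpc] at hA hta
      obtain ⟨hta, -, hn⟩ := hta
      rw [hta] at hac
      obtain rfl : c = st.gcolor := by simpa using hac
      exact absurd (.inr hk) (hA (fun _ => trivial) (by simp [hta]) (by simp [hta, hn]) k)
    | flip hpc =>
      rw [hpc] at hta
      obtain ⟨hta, -, hn⟩ := hta
      rw [hta] at hac
      obtain rfl := Option.some_inj.mp hac
      exact absurd hg hne
  · rw [hp a ha] at hpa
    rw [ht a ha] at hac ⊢
    exact hex hpa hac

theorem BWTrans.level_cases {st st' : BWState N} {i j : Fin N} (h : BWTrans st i st')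
    (hc : st.Consistent) (hg : st'.gcolor = st.gcolor) (hj : st'.HasColor j st.gcolor) :
    (st'.token j).session = (st.token j).session ∧
      ((st'.pc j).level (st'.token j) = 0 ∨ st.HasColor j st.gcolor ∧
        ((st'.pc j).level (st'.token j) = (st.pc j).level (st.token j) ∨
          ∃ z, st.Rival z j st.gcolor ∧
            (st.token z).number = (st'.pc j).level (st'.token j))) := by
  obtain ⟨hp, ht, hch, hm⟩ := h
  have htj := hc.token j
  by_cases hji : j = i
  · subst hji
    unfold BWState.HasColor BWState.Rival at *
    generalize st'.pc j = p, st'.token j = t, st'.choosing j = b, st'.gcolor = g at hm hj hg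
    cases hm <;>
      grind [BWPc.TokenOk, BWPc.level, BWPc.scanColor, BWTok.init]
  · simp_all [BWState.HasColor]

theorem BWTrans.token_eq_of_color {st st' : BWState N} {i j : Fin N} (h : BWTrans st i st')
    (hc : st.Consistent) {c : Color} (hj : (st.token j).color = some c) :
    st'.token j = st.token j ∨ j = i ∧ st.pc j = .x2 := by
  obtain ⟨hp, ht, hch, hm⟩ := h
  have htj := hc.token j
  by_cases hji : j = i
  · subst hji
    generalize st'.pc j = p, st'.token j = t, st'.choosing j = b, st'.gcolor = g at hm
    cases hm <;> grind [BWPc.TokenOk, BWTok.init]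
  · exact .inl (ht j hji)

theorem BWTrans.witnessed {st st' : BWState N} {i : Fin N} (h : BWTrans st i st')
    (hI : st.Invariant) (hg : st'.gcolor = st.gcolor) : st'.Witnessed := by
  intro a b ha hb hs hl
  rw [hg] at ha hb ⊢
  obtain ⟨hb', hbs, -⟩ := h.of_hasColor_opp hI.consistent hg hb
  obtain ⟨has, hcase⟩ := h.level_cases hI.consistent hg ha
  rw [has, hbs] at hs
  obtain ⟨z, hz, hzl⟩ : ∃ z, st.Rival z a st.gcolor ∧
      (st.token z).number ≤ (st'.pc a).level (st'.token a) := by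
    obtain h0 | ⟨ha', he | ⟨z, hz, hzl⟩⟩ := hcase
    · omega
    · rw [he] at hl ⊢
      exact hI.witnessed a b ha' hb' hs hl
    · exact ⟨z, hz, hzl.le⟩
  obtain htz | ⟨-, hpz⟩ := h.token_eq_of_color hI.consistent hz.1
  · exact ⟨z, by simpa [BWState.Rival, htz, has] using hz, by rwa [htz]⟩
  · refine absurd ?_ (hI.oppositeBlocks z b hz.1 hb' (hs ▸ hz.2)).1
    rw [hpz]
    trivial

theorem BWTrans.gapless {st st' : BWState N} {i : Fin N} (h : BWTrans st i st')
    (hI : st.Invariant) (hg : st'.gcolor = st.gcolor) : st'.Gapless := by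
  intro a u ha hu hl
  rw [hg] at ha ⊢
  obtain ⟨z, hz, hzu⟩ : ∃ z, (st.token z).color = some st.gcolor ∧ (st.token z).number = u := by
    obtain h0 | ⟨ha', he | ⟨z, hz, hzl⟩⟩ := (h.level_cases hI.consistent hg ha).2
    · omega
    · exact hI.gapless a u ha' hu (he ▸ hl)
    · obtain rfl | hlt := hl.eq_or_lt
      · exact ⟨z, hz.1, hzl⟩
      · refine hI.gapless z u (.inr hz.1) hu ?_
        rw [BWPc.level_eq ((hI.consistent.token z).number_pos hz.1).2.2]
        omega
  obtain htz | ⟨-, hpz⟩ := h.token_eq_of_color hI.consistent hz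
  · exact ⟨z, by rwa [htz], by rwa [htz]⟩
  · have := hI.exitOne z hpz hz
    omega

theorem BWState.mem_scanners {st : BWState N} {c : Color} {i : Fin N} :
    i ∈ st.scanners c ↔ (st.pc i).scanColor = some c := by
  simp [BWState.scanners]

theorem BWTrans.bounded {st st' : BWState N} {i : Fin N} (h : BWTrans st i st')
    (hI : st.Consistent) (hb : st.Bounded st.gcolor.opp) (hg : st'.gcolor = st.gcolor) :
    st'.Bounded st.gcolor.opp := by
  obtain ⟨hp, ht, hch, hm⟩ := h
  have hne := st.gcolor.opp_ne
  have hti := hI.token i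
  set c := st.gcolor.opp with hcdef
  have hsub : st'.scanners c ⊆ st.scanners c := by
    intro k hk
    simp only [BWState.mem_scanners] at hk ⊢
    by_cases hki : k = i
    · subst hki
      clear hb
      generalize st'.pc k = p, st'.token k = t, st'.choosing k = b, st'.gcolor = g at *
      cases hm <;> grind [BWPc.scanColor]
    · rwa [← hp k hki]
  have hle := Finset.card_le_card hsub
  constructor
  · intro k hk
    by_cases hki : k = i
    · subst hki
      obtain htk | ⟨s, m, hpk, hpk', htk⟩ := hm.color_inv hk
      · rw [htk] at hk ⊢
        have := hb.1 k hk
        omega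
      · have hlt : (st'.scanners c).card < (st.scanners c).card := by
          refine Finset.card_lt_card ⟨hsub, fun h => ?_⟩
          have : k ∈ st'.scanners c :=
            h (by simp [BWState.mem_scanners, hpk, BWPc.scanColor])
          simp [BWState.mem_scanners, hpk', BWPc.scanColor] at this
        have := hb.2 k (by simp [hpk, BWPc.scanColor])
        rw [hpk] at this hti
        simp only [BWPc.level, BWPc.TokenOk] at this hti
        rw [htk]
        dsimp only
        omega
    · rw [ht k hki] at hk ⊢
      have := hb.1 k hk
      omega
  · intro k hk
    by_cases hki : k = i
    · subst hki
      have hb2 := hb.2 k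
      have hb1 := hb.1
      suffices (st'.pc k).level (st'.token k) + (st.scanners c).card ≤ N + 1 by omega
      clear hsub hle hb
      generalize st'.pc k = p, st'.token k = t, st'.choosing k = b, st'.gcolor = g at *
      cases hm <;> grind [BWPc.scanColor, BWPc.level]
    · rw [hp k hki] at hk ⊢
      rw [ht k hki]
      have := hb.2 k hk
      omega

/-- Distinct published numbers `2, …, u` of one color and the scanners of that color are
distinct processes. -/
theorem BWState.Consistent.card_scanners_le {st : BWState N} (hc : st.Consistent) {c : Color}
    {u : ℕ} (hu : ∀ v, 2 ≤ v → v ≤ u →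
      ∃ z, (st.token z).color = some c ∧ (st.token z).number = v) :
    u + (st.scanners c).card ≤ N + 1 := by
  let S := Finset.univ.filter fun z => (st.token z).color = some c
  have hdisj : Disjoint S (st.scanners c) := by
    rw [Finset.disjoint_left]
    intro z hz hz'
    simp only [S, BWState.mem_scanners, Finset.mem_filter, Finset.mem_univ, true_and] at hz hz'
    simp [((hc.token z).number_pos hz).2.2] at hz'
  have hsub : Finset.Icc 2 u ⊆ S.image fun z => (st.token z).number := by
    intro v hv
    obtain ⟨z, hz, hzv⟩ := hu v (Finset.mem_Icc.mp hv).1 (Finset.mem_Icc.mp hv).2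
    exact Finset.mem_image.mpr ⟨z, by simpa [S] using hz, hzv⟩
  have hcard := (Finset.card_le_card hsub).trans Finset.card_image_le
  have hN := Finset.card_le_univ (S ∪ st.scanners c)
  rw [Finset.card_union_of_disjoint hdisj, Fintype.card_fin] at hN
  rw [Nat.card_Icc] at hcard
  omega

theorem BWState.Gapless.bounded {st : BWState N} (h : st.Gapless) (hc : st.Consistent) :
    st.Bounded st.gcolor := by
  constructor
  · intro i hi
    refine hc.card_scanners_le fun v hv hvi => ?_
    obtain rfl | hlt := hvi.eq_or_lt
    · exact ⟨i, hi, rfl⟩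
    · refine h i v (.inr hi) hv ?_
      rw [BWPc.level_eq ((hc.token i).number_pos hi).2.2]
      omega
  · intro i hi
    exact hc.card_scanners_le fun v hv hvi => h i v (.inl hi) hv hvi

theorem BWTrans.invariant {st st' : BWState N} {i : Fin N} (h : BWTrans st i st')
    (hI : st.Invariant) : st'.Invariant := by
  have hc' := h.consistent hI.consistent
  have ho' := h.ordered hI.consistent hI.ordered
  by_cases hg : st'.gcolor = st.gcolor
  · refine ⟨hc', h.oppositeBlocks hI.consistent hg hI.oppositeBlocks, ho',
      h.witnessed hI hg, h.exitOne hI hg, h.gapless hI hg, ?_⟩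
    rw [hg]
    exact h.bounded hI.consistent hI.bounded hg
  · obtain hg' | ⟨s, c, m, hpi, hgc, hpi', hti'⟩ := h.move.gcolor_inv
    · exact absurd hg' hg
    obtain rfl : c = st.gcolor := by
      by_contra hcg
      rw [Color.eq_opp_of_ne hcg, Color.opp_opp] at hgc
      exact hg hgc
    have hti := hI.consistent.token i
    have hA := hI.not_hasColor_opp (i := i)
    rw [hpi] at hti hA
    obtain ⟨hti, -, hm⟩ := hti
    have hold := hA (fun _ => trivial) (by simp [hti]) (by simp [hti, hm])
    have htok : ∀ k, st'.token k = st.token k := fun k => by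
      by_cases hk : k = i
      · rw [hk, hti']
      · exact h.token_ne k hk
    have hscan : ∀ k, (st'.pc k).scanColor = (st.pc k).scanColor := fun k => by
      by_cases hk : k = i
      · simp [hk, hpi, hpi', BWPc.scanColor]
      · rw [h.pc_ne k hk]
    have hnone : ∀ k, ¬ st'.HasColor k st'.gcolor := fun k => by
      have := hold k
      rwa [BWState.HasColor, hscan, htok, hgc]
    refine ⟨hc', fun a b ha => absurd (.inr ha) (hnone a), ho',
      fun a b ha => absurd ha (hnone a), fun a _ ha => absurd (.inr ha) (hnone a),
      fun a u ha => absurd ha (hnone a), ?_⟩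
    have hb := hI.gapless.bounded hI.consistent
    have hscanners : st'.scanners st.gcolor = st.scanners st.gcolor := by
      simp [BWState.scanners, hscan]
    rw [hgc, Color.opp_opp]
    refine ⟨fun k hk => ?_, fun k hk => ?_⟩
    · rw [htok] at hk ⊢
      rw [hscanners]
      exact hb.1 k hk
    · have hki : k ≠ i := by
        rintro rfl
        simp [hpi', BWPc.scanColor] at hk
      rw [htok, hscanners, h.pc_ne k hki]
      exact hb.2 k (by rwa [h.pc_ne k hki] at hk)

theorem bwInit_invariant (c : Color) : (bwInit N c).Invariant := by
  have hcol : ∀ k d, ¬ (bwInit N c).HasColor k d := by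
    simp [BWState.HasColor, bwInit, BWTok.init, BWPc.scanColor]
  refine ⟨⟨fun _ => rfl, fun _ => rfl⟩, fun a b ha => absurd (.inr ha) (hcol a _),
    fun a b d ha => absurd (.inr ha.1) (hcol a d), fun a b ha => absurd ha (hcol a _),
    fun a _ ha => absurd (.inr ha) (hcol a _), fun a u ha => absurd ha (hcol a _),
    fun a ha => absurd (.inr ha) (hcol a _), fun a ha => absurd (.inl ha) (hcol a _)⟩

theorem BWExec.invariant (e : BWExec N) (n : ℕ) : (e.state n).Invariant := by
  induction n with
  | zero =>
    obtain ⟨c, hc⟩ := e.init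
    exact hc ▸ bwInit_invariant c
  | succ n ih =>
    obtain h | h := (e.step n).eq_or_trans
    · exact h ▸ ih
    · exact h.invariant ih

theorem BWPc.TokenOk.number_eq_zero {p : BWPc} {t : BWTok} (h : p.TokenOk t)
    (hc : t.color = none) : t.number = 0 := by
  cases p <;> simp only [TokenOk] at h <;> grind [BWTok.init]

end

/-- **Boundedness of the shared registers of the BWBGME algorithm.**  In every reachable
state of every execution, `Token[i].number ≤ N + 1` for every process `i`; hence all
shared variables of the algorithm other than the session field (whose values come from
the application) range over a bounded domain. -/
theorem bw_token_number_bounded {N : ℕ} (e : BWExec N) (n : ℕ) (i : Fin N) :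
    ((e.state n).token i).number ≤ N + 1 := by
  have h := e.invariant n
  rcases hc : ((e.state n).token i).color with _ | c
  · simp [(h.consistent.token i).number_eq_zero hc]
  · by_cases hcg : c = (e.state n).gcolor
    · have := (h.gapless.bounded h.consistent).1 i (hcg ▸ hc)
      omega
    · have := h.bounded.1 i (Color.eq_opp_of_ne hcg ▸ hc)
      omega
end

section
/- The BWBGME algorithm has O(N) remote memory reference complexity in the CC model: there is a constant c such that in every execution, every single invocation (one pass through entry section, critical section and exit section) by any process incurs at most c·N remote memory references. -/
/-! ### Remote memory references in the cache-coherent (CC) model -/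

/-- The shared variables of the BWBGME algorithm. -/
inductive BWVar (N : ℕ) : Type
  | gcolor
  | token (j : Fin N)
  | choosing (j : Fin N)
  deriving DecidableEq

/-- Shared variables read by the next step of process `i` in state `st`. -/
def bwReads {N : ℕ} (st : BWState N) (i : Fin N) : Finset (BWVar N) :=
  match st.pc i with
  | .d3 _ => {BWVar.gcolor}
  | .scan _ _ j _ => if h : j < N then {BWVar.token ⟨j, h⟩} else ∅
  | .w1 _ _ _ j => if h : j < N then {BWVar.choosing ⟨j, h⟩, BWVar.token ⟨j, h⟩} else ∅
  | .wB _ _ _ j => if h : j < N then {BWVar.token ⟨j, h⟩} else ∅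
  | .wSame _ _ _ j => if h : j < N then {BWVar.token ⟨j, h⟩} else ∅
  | .wDiff _ _ _ j => if h : j < N then {BWVar.gcolor, BWVar.token ⟨j, h⟩} else ∅
  | .x1 _ _ _ j => if h : j < N then {BWVar.token ⟨j, h⟩} else ∅
  | _ => ∅

/-- Shared variables written by the next step of process `i` in state `st`. -/
def bwWrites {N : ℕ} (st : BWState N) (i : Fin N) : Finset (BWVar N) :=
  match st.pc i with
  | .d1 _ => {BWVar.token i}
  | .d2 _ => {BWVar.choosing i}
  | .d4 _ _ _ => {BWVar.token i}
  | .d5 _ _ _ => {BWVar.choosing i}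
  | .xFlip _ _ _ => {BWVar.gcolor}
  | .x2 => {BWVar.token i}
  | _ => ∅

/-- `bwCached e n p v` holds iff just before step `n`, process `p` holds a valid cached
copy of variable `v`: a copy is acquired by reading `v` and stays valid until some
process writes `v`. -/
def bwCached {N : ℕ} (e : BWExec N) : ℕ → Fin N → BWVar N → Bool
  | 0, _, _ => false
  | n + 1, p, v =>
      (bwCached e n p v || (decide (e.sched n = p) && decide (v ∈ bwReads (e.state n) p)))
        && ! decide (v ∈ bwWrites (e.state n) (e.sched n))

/-- The number of remote memory references incurred by step `n` of the execution: every
write is an RMR, and a read is an RMR iff the stepping process holds no valid cached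
copy. -/
def bwStepRMR {N : ℕ} (e : BWExec N) (n : ℕ) : ℕ :=
  (bwWrites (e.state n) (e.sched n)).card +
    ((bwReads (e.state n) (e.sched n)).filter
      (fun v => bwCached e n (e.sched n) v = false)).card

/-- The shared state a process has at each program counter. -/
def bwLocalInv (t : BWTok) (ch : Bool) : BWPc → Prop
  | .remainder => t.session = 0 ∧ ch = false
  | .d1 s => 0 < s ∧ t.session = 0 ∧ ch = false
  | .d2 s => 0 < s ∧ t.session = s ∧ ch = false
  | .d3 s => 0 < s ∧ t.session = s
  | .scan s _ _ _ => 0 < s ∧ t.session = s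
  | .d4 s _ _ => 0 < s ∧ t.session = s
  | .d5 s c m => 0 < s ∧ t = ⟨s, some c, m⟩
  | .w1 s c m _ => 0 < s ∧ t = ⟨s, some c, m⟩ ∧ ch = false
  | .wB s c m _ => 0 < s ∧ t = ⟨s, some c, m⟩ ∧ ch = false
  | .wSame s c m _ => 0 < s ∧ t = ⟨s, some c, m⟩ ∧ ch = false
  | .wDiff s c m _ => 0 < s ∧ t = ⟨s, some c, m⟩ ∧ ch = false
  | .cs s c m => 0 < s ∧ t = ⟨s, some c, m⟩ ∧ ch = false
  | .x1 s c m _ => 0 < s ∧ t = ⟨s, some c, m⟩ ∧ ch = false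
  | .xFlip s c m => 0 < s ∧ t = ⟨s, some c, m⟩ ∧ ch = false
  | .x2 => ch = false

def bwInv {N : ℕ} (st : BWState N) : Prop :=
  ∀ k, bwLocalInv (st.token k) (st.choosing k) (st.pc k)

theorem bwStep_frame {N : ℕ} {st st' : BWState N} {k : Fin N} (h : bwStep st k st')
    (j : Fin N) (hj : j ≠ k) :
    st'.token j = st.token j ∧ st'.choosing j = st.choosing j ∧ st'.pc j = st.pc j := by
  unfold bwStep at h
  split at h <;> (try split_ifs at h) <;>
    (first | subst h | (rcases h with rfl | ⟨_, _, rfl⟩)) <;> simp [Function.update_of_ne hj]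

theorem bwStep_localInv {N : ℕ} {st st' : BWState N} {k : Fin N} (h : bwStep st k st')
    (hI : bwLocalInv (st.token k) (st.choosing k) (st.pc k)) :
    bwLocalInv (st'.token k) (st'.choosing k) (st'.pc k) := by
  unfold bwStep at h
  split at h <;> rename_i hpc <;> rw [hpc] at hI <;> (try split_ifs at h) <;>
    (first | subst h | (rcases h with rfl | ⟨_, _, rfl⟩)) <;>
    simp_all [bwLocalInv, BWTok.init]

theorem bwInv_step {N : ℕ} {st st' : BWState N} {k : Fin N} (h : bwStep st k st')
    (hI : bwInv st) : bwInv st' := by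
  intro j
  by_cases hj : j = k
  · subst hj; exact bwStep_localInv h (hI j)
  · obtain ⟨h1, h2, h3⟩ := bwStep_frame h j hj
    rw [h1, h2, h3]; exact hI j

theorem BWExec.inv {N : ℕ} (e : BWExec N) (n : ℕ) : bwInv (e.state n) := by
  induction n with
  | zero =>
    obtain ⟨c0, h⟩ := e.init
    intro k
    simp [h, bwInit, bwLocalInv, BWTok.init]
  | succ n ih => exact bwInv_step (e.step n) ih

/-! ### Credits

In the waiting room, a process `i` with published token `(s, c, m)` pays for its remote
references out of three credits: one per process that may still write
`GlobalColor := c`, one for an invalid copy of `GlobalColor`, and those of the process `j`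
that `i` currently examines. -/

/-- A process at this program counter may write `GlobalColor := c` without any further
read of `Token[i]`. -/
def bwMayWrite (i : ℕ) (c : Color) : BWPc → Prop
  | .xFlip _ c' _ => c' ≠ c
  | .x1 _ c' _ j => c' ≠ c ∧ i < j
  | _ => False

/-- The number of writes still to come in the doorway. -/
def bwDoorWrites : BWPc → ℕ
  | .d2 _ => 3
  | .d3 _ => 2
  | .scan _ _ _ _ => 2
  | .d4 _ _ _ => 2
  | .d5 _ _ _ => 1
  | _ => 0

/-- A conflicting process at this program counter cannot reach its critical section as
long as `Token[i] = (s, c, m)` and `GlobalColor` is not set to `c`; `g` is the current value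
of `GlobalColor`. -/
def bwHeld (i : ℕ) (c : Color) (m : ℕ) (g : Color) : BWPc → Prop
  | .d2 _ => True
  | .d3 _ => True
  | .scan _ c' j m' => (c' = c → j ≤ i ∨ m ≤ m') ∧ (c' ≠ c → g ≠ c)
  | .d4 _ c' m' => (c' = c → m < m') ∧ (c' ≠ c → g ≠ c)
  | .d5 _ c' m' => (c' = c → m < m') ∧ (c' ≠ c → g ≠ c)
  | .w1 _ c' m' j => j ≤ i ∧ (c' = c → m < m') ∧ (c' ≠ c → g ≠ c)
  | .wB _ c' m' j => j ≤ i ∧ (c' = c → m < m') ∧ (c' ≠ c → g ≠ c)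
  | .wSame _ c' m' j => j ≤ i ∧ (c' = c → m < m') ∧ (c' ≠ c → g ≠ c ∧ j < i)
  | .wDiff _ c' m' j => j ≤ i ∧ (c' = c → m < m' ∧ j < i) ∧ (c' ≠ c → g ≠ c)
  | _ => False

open Classical in
/-- Credit of the examined process `j`: it covers the references of a process `i`, with token
`(s, c, m)` and cache `C`, to the variables of `j`. -/
noncomputable def bwPeerCredit {N : ℕ} (st : BWState N) (C : BWVar N → Bool) (i : Fin N)
    (s : ℕ) (c : Color) (m : ℕ) (j : Fin N) : ℕ :=
  if (st.token j).session = 0 ∨ (st.token j).session = s then 5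
  else (if C (.token j) then 0 else 1) + (if C (.choosing j) then 0 else 1) +
    bwDoorWrites (st.pc j) + (if bwHeld i c m st.gcolor (st.pc j) then 0 else 5)

open Classical in
/-- Number of processes that may still write `GlobalColor := c`. -/
noncomputable def bwWriters {N : ℕ} (st : BWState N) (i : Fin N) (c : Color) : ℕ :=
  (Finset.univ.filter fun k => bwMayWrite i c (st.pc k)).card

/-- Credit for an invalid copy of `GlobalColor = c`. -/
def bwColorCredit {N : ℕ} (st : BWState N) (C : BWVar N → Bool) (c : Color) : ℕ :=
  if C .gcolor = false ∧ st.gcolor = c then 1 else 0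

/-- Credit of a process in the waiting room examining index `j`. -/
noncomputable def bwWaitCredit {N : ℕ} (st : BWState N) (C : BWVar N → Bool) (i : Fin N)
    (s : ℕ) (c : Color) (m j : ℕ) : ℕ :=
  N + 5 + 16 * (N - j) + (if h : j < N then bwPeerCredit st C i s c m ⟨j, h⟩ else 0) +
    6 * bwWriters st i c + bwColorCredit st C c

/-- Upper bound on the number of remote references of the rest of the invocation of `i`. -/
noncomputable def bwCredit {N : ℕ} (st : BWState N) (C : BWVar N → Bool) (i : Fin N) : ℕ :=
  match st.pc i with
  | .remainder => 0
  | .d1 _ => 24 * N + 26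
  | .d2 _ => 24 * N + 25
  | .d3 _ => 24 * N + 24
  | .scan _ _ j _ => 23 * N + 23 + (N - j)
  | .d4 _ _ _ => 23 * N + 22
  | .d5 _ _ _ => 23 * N + 21
  | .w1 s c m j => bwWaitCredit st C i s c m j + 5
  | .wB s c m j => bwWaitCredit st C i s c m j + 3
  | .wSame s c m j => bwWaitCredit st C i s c m j + 2
  | .wDiff s c m j => bwWaitCredit st C i s c m j + 2
  | .cs _ _ _ => N + 4
  | .x1 _ _ _ j => 3 + (N - j)
  | .xFlip _ _ _ => 2
  | .x2 => 1

/-- The cache of `i` after a step of `k`. -/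
def bwCacheStep {N : ℕ} (st : BWState N) (C : BWVar N → Bool) (i k : Fin N)
    (v : BWVar N) : Bool :=
  (C v || (decide (k = i) && decide (v ∈ bwReads st k))) && ! decide (v ∈ bwWrites st k)

theorem bwDoorWrites_le (i : ℕ) (c : Color) (m : ℕ) (g : Color) (p : BWPc) :
    bwDoorWrites p ≤ 2 ∨ bwDoorWrites p ≤ 3 ∧ bwHeld i c m g p := by
  cases p <;> simp [bwDoorWrites, bwHeld]

theorem bwPeerCredit_le {N : ℕ} (st : BWState N) (C : BWVar N → Bool) (i : Fin N)
    (s : ℕ) (c : Color) (m : ℕ) (j : Fin N) : bwPeerCredit st C i s c m j ≤ 9 := by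
  unfold bwPeerCredit
  have := bwDoorWrites_le i c m st.gcolor (st.pc j)
  split_ifs <;> grind

theorem bwColorCredit_le {N : ℕ} (st : BWState N) (C : BWVar N → Bool) (c : Color) :
    bwColorCredit st C c ≤ 1 := by
  unfold bwColorCredit; split_ifs <;> omega

theorem bwWriters_le {N : ℕ} (st : BWState N) (i : Fin N) (c : Color) :
    bwWriters st i c ≤ N := by
  unfold bwWriters
  exact (Finset.card_le_univ _).trans (by simp)

theorem bwWaitCredit_le {N : ℕ} (st : BWState N) (C : BWVar N → Bool) (i : Fin N)
    (s : ℕ) (c : Color) (m j : ℕ) : bwWaitCredit st C i s c m j ≤ 23 * N + 15 := by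
  unfold bwWaitCredit
  have h1 := bwColorCredit_le st C c
  have h2 := bwWriters_le st i c
  split_ifs with h
  · have h3 := bwPeerCredit_le st C i s c m ⟨j, h⟩
    omega
  · omega

theorem Color.eq_of_ne_of_ne {a b c : Color} (h : a ≠ c) (h' : b ≠ c) : a = b := by
  cases a <;> cases b <;> cases c <;> simp_all

theorem Color.opp_eq_iff {a c : Color} : a.opp = c ↔ a ≠ c := by
  cases a <;> cases c <;> simp [Color.opp]

/-- The step of `k` writes `GlobalColor := c`. -/
def bwSetsColor (c : Color) : BWPc → Prop
  | .xFlip _ c' _ => c' ≠ c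
  | _ => False

theorem bwMayWrite_of_step {N : ℕ} {st st' : BWState N} {i k : Fin N} {c : Color}
    (h : bwStep st k st') (hs : (st.token i).session ≠ 0) (hc : (st.token i).color = some c)
    (hk : bwMayWrite i c (st'.pc k)) :
    bwMayWrite i c (st.pc k) ∧ ¬ bwSetsColor c (st.pc k) := by
  unfold bwStep at h
  split at h <;> rename_i hpc <;> (try split_ifs at h) <;>
    (first | subst h | (rcases h with rfl | ⟨_, _, rfl⟩)) <;>
    simp_all [bwMayWrite, bwSetsColor]
  · obtain ⟨h3, h4⟩ := hk
    rename_i h5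
    refine lt_of_le_of_ne h4 fun h6 => ?_
    subst h6
    exact h5 hs (by rw [hc, Color.opp_eq_iff.mpr h3])
  · omega

open Classical in
theorem bwWriters_step {N : ℕ} {st st' : BWState N} {i k : Fin N} {c : Color}
    (h : bwStep st k st') (hs : (st.token i).session ≠ 0)
    (hc : (st.token i).color = some c) :
    bwWriters st' i c + (if bwSetsColor c (st.pc k) then 1 else 0) ≤ bwWriters st i c := by
  have key : ∀ j, bwMayWrite i c (st'.pc j) → bwMayWrite i c (st.pc j) := by
    intro j hj
    by_cases hjk : j = k
    · subst hjk; exact (bwMayWrite_of_step h hs hc hj).1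
    · rwa [(bwStep_frame h j hjk).2.2] at hj
  unfold bwWriters
  split_ifs with hset
  · apply Finset.card_lt_card
    refine (Finset.ssubset_iff_of_subset
      (Finset.monotone_filter_right _ fun j _ => key j)).mpr ⟨k, ?_, ?_⟩
    · simp only [Finset.mem_filter, Finset.mem_univ, true_and]
      cases hp : st.pc k <;> simp_all [bwSetsColor, bwMayWrite]
    · simp only [Finset.mem_filter, Finset.mem_univ, true_and]
      exact fun hk => (bwMayWrite_of_step h hs hc hk).2 hset
  · rw [add_zero]
    exact Finset.card_le_card (Finset.monotone_filter_right _ fun j _ => key j)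

theorem bwStep_gcolor {N : ℕ} {st st' : BWState N} {k : Fin N}
    (h : bwStep st k st') (c : Color) :
    (st'.gcolor = c → st.gcolor = c ∨ bwSetsColor c (st.pc k)) ∧
      (BWVar.gcolor ∈ bwWrites st k → st'.gcolor = c → bwSetsColor c (st.pc k)) := by
  unfold bwStep at h
  split at h <;> rename_i hpc <;> (try split_ifs at h) <;>
    (first | subst h | (rcases h with rfl | ⟨_, _, rfl⟩)) <;>
    simp_all [bwSetsColor, bwWrites, Color.opp_eq_iff]

open Classical in
theorem bwColorCredit_step {N : ℕ} {st st' : BWState N} {k : Fin N} (i : Fin N)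
    (C : BWVar N → Bool) (c : Color) (h : bwStep st k st') :
    bwColorCredit st' (bwCacheStep st C i k) c ≤
      bwColorCredit st C c + (if bwSetsColor c (st.pc k) then 1 else 0) := by
  obtain ⟨h1, h2⟩ := bwStep_gcolor h c
  unfold bwColorCredit bwCacheStep
  by_cases h3 : bwSetsColor c (st.pc k)
  · split_ifs <;> omega
  · by_cases h4 : st'.gcolor = c
    · have h5 := (h1 h4).resolve_right h3
      have h6 : BWVar.gcolor ∉ bwWrites st k := fun h => h3 (h2 h h4)
      cases hC : C .gcolor <;> simp [h3, h4, h5, h6]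
      split_ifs <;> omega
    · simp [h4]

theorem bwHeld_mono {i : ℕ} {c : Color} {m : ℕ} {g g' : Color} {p : BWPc}
    (hg : g' = c → g = c) (h : bwHeld i c m g p) : bwHeld i c m g' p := by
  cases p <;> simp only [bwHeld] at h ⊢ <;> grind

theorem bwHeld_step {N : ℕ} {st st' : BWState N} {i j : Fin N} {s : ℕ} {c : Color} {m : ℕ}
    (h : bwStep st j st') (hI : bwLocalInv (st.token j) (st.choosing j) (st.pc j))
    (hs : 0 < s) (hi : st.token i = ⟨s, some c, m⟩) (hj : (st.token j).session ≠ s)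
    (hh : bwHeld i c m st.gcolor (st.pc j)) :
    bwHeld i c m st'.gcolor (st'.pc j) := by
  have hiN := i.isLt
  have hne : ∀ s' c' m' j', st.pc j = .wDiff s' c' m' j' → c' ≠ c → st.gcolor ≠ c →
      st.gcolor = c' :=
    fun _ _ _ _ _ h1 h2 => Color.eq_of_ne_of_ne h2 h1
  unfold bwStep at h
  split at h <;> rename_i hpc <;> rw [hpc] at hI hh <;>
    simp only [bwHeld, bwLocalInv] at hI hh <;> (try split_ifs at h) <;>
    subst h <;> simp only [Function.update_self, bwHeld, hpc] <;> grind

theorem bwPeerWrites_step {N : ℕ} {st st' : BWState N} {j : Fin N} (C : BWVar N → Bool)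
    (i : Fin N) (h : bwStep st j st') (hij : j ≠ i)
    (hI : bwLocalInv (st.token j) (st.choosing j) (st.pc j)) (hj : (st.token j).session ≠ 0) :
    ((st'.token j).session = 0 ∧ st.pc j = .x2) ∨ ((st'.token j).session = (st.token j).session ∧
      (if bwCacheStep st C i j (.token j) then 0 else 1) +
        (if bwCacheStep st C i j (.choosing j) then 0 else 1) + bwDoorWrites (st'.pc j) ≤
      (if C (.token j) then 0 else 1) + (if C (.choosing j) then 0 else 1) +
        bwDoorWrites (st.pc j)) := by
  unfold bwStep at h
  split at h <;> rename_i hpc <;> rw [hpc] at hI <;> (try split_ifs at h) <;>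
    (first | subst h | (rcases h with rfl | ⟨_, _, rfl⟩)) <;>
    simp_all [bwLocalInv, BWTok.init, bwCacheStep, bwWrites, bwDoorWrites] <;> grind

theorem bwWrites_other {N : ℕ} (st : BWState N) {j k : Fin N} (h : j ≠ k) :
    BWVar.token j ∉ bwWrites st k ∧ BWVar.choosing j ∉ bwWrites st k := by
  unfold bwWrites
  split <;> simp [h]

theorem bwCacheStep_le {N : ℕ} (st : BWState N) (C : BWVar N → Bool) (i k : Fin N)
    {v : BWVar N} (hv : v ∉ bwWrites st k) (hC : C v = true) :
    bwCacheStep st C i k v = true := by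
  simp [bwCacheStep, hv, hC]

theorem bwPeerCredit_of_le {N : ℕ} {st st' : BWState N} {C C' : BWVar N → Bool}
    {i : Fin N} {s : ℕ} {c : Color} {m : ℕ} {j : Fin N} (ht : st'.token j = st.token j)
    (hpc : (st.token j).session ≠ s → st'.pc j = st.pc j)
    (hg : st'.gcolor = c → st.gcolor = c) (hC : C (.token j) = true → C' (.token j) = true)
    (hC' : C (.choosing j) = true → C' (.choosing j) = true) :
    bwPeerCredit st' C' i s c m j ≤ bwPeerCredit st C i s c m j := by
  unfold bwPeerCredit
  rw [ht]
  by_cases h1 : (st.token j).session = 0 ∨ (st.token j).session = s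
  · simp [h1]
  · rw [hpc (not_or.mp h1).2]
    have hm := fun h => bwHeld_mono (i := i) (m := m) (p := st.pc j) hg h
    simp only [h1, if_false]
    gcongr ?_ + ?_ + _ + ?_
    all_goals split_ifs <;> first | omega | (exfalso; tauto)

open Classical in
theorem bwPeerCredit_step {N : ℕ} {st st' : BWState N} (C : BWVar N → Bool) {i k : Fin N}
    {s : ℕ} {c : Color} {m : ℕ} (j : Fin N) (h : bwStep st k st') (hki : k ≠ i)
    (hI : bwInv st) (hs : 0 < s) (hi : st.token i = ⟨s, some c, m⟩) :
    bwPeerCredit st' (bwCacheStep st C i k) i s c m j ≤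
      bwPeerCredit st C i s c m j + (if bwSetsColor c (st.pc k) then 5 else 0) := by
  by_cases hjk : j = k
  · subst hjk
    by_cases hses : (st.token j).session = 0 ∨ (st.token j).session = s
    · have hP : bwPeerCredit st' (bwCacheStep st C i j) i s c m j ≤ 5 := by
        have hIj := hI j
        unfold bwPeerCredit
        unfold bwStep at h
        split at h <;> rename_i hpc <;> rw [hpc] at hIj <;> (try split_ifs at h) <;>
          (first | subst h | (rcases h with rfl | ⟨_, _, rfl⟩)) <;>
          simp_all [bwLocalInv, BWTok.init, bwDoorWrites, bwHeld]
        all_goals split_ifs <;> omega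
      refine hP.trans (le_add_right ?_)
      simp [bwPeerCredit, hses]
    · obtain ⟨h0, h1⟩ := not_or.mp hses
      have hheld := bwHeld_step h (hI j) hs hi h1
      have hw := bwPeerWrites_step C i h hki (hI j) h0
      rcases hw with ⟨hw1, hw2⟩ | ⟨hw1, hw2⟩
      · simp [bwPeerCredit, hw1, h0, h1, hw2, bwHeld]
        omega
      · simp only [bwPeerCredit, hw1, hses, if_false]
        by_cases hh : bwHeld i c m st.gcolor (st.pc j)
        · simp only [hh, hheld hh, if_true]
          omega
        · simp only [hh, if_false]
          split_ifs at hw2 ⊢ <;> omega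
  · obtain ⟨h1, h2, h3⟩ := bwStep_frame h j hjk
    obtain ⟨hw1, hw2⟩ := bwWrites_other st hjk
    have hg := (bwStep_gcolor h c).1
    by_cases hset : bwSetsColor c (st.pc k)
    · have hC1 := bwCacheStep_le st C i k hw1
      have hC2 := bwCacheStep_le st C i k hw2
      simp only [bwPeerCredit, h1, h3, hset]
      split_ifs <;> first | omega | grind
    · simp only [hset, if_false, add_zero]
      exact bwPeerCredit_of_le h1 (fun _ => h3) (fun h => (hg h).resolve_right hset)
        (bwCacheStep_le st C i k hw1) (bwCacheStep_le st C i k hw2)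

open Classical in
theorem bwWaitCredit_step {N : ℕ} {st st' : BWState N} (C : BWVar N → Bool) {i k : Fin N}
    {s : ℕ} {c : Color} {m : ℕ} (j : ℕ) (h : bwStep st k st') (hki : k ≠ i)
    (hI : bwInv st) (hs : 0 < s) (hi : st.token i = ⟨s, some c, m⟩) :
    bwWaitCredit st' (bwCacheStep st C i k) i s c m j ≤ bwWaitCredit st C i s c m j := by
  have hA := bwWriters_step (i := i) (c := c) h (by rw [hi]; exact hs.ne') (by rw [hi])
  have hU := bwColorCredit_step i C c h
  unfold bwWaitCredit
  by_cases hj : j < N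
  · have hP := bwPeerCredit_step C ⟨j, hj⟩ h hki hI hs hi
    simp only [hj, dif_pos]
    split_ifs at hA hU hP <;> omega
  · simp only [hj, dif_neg, not_false_eq_true]
    split_ifs at hA hU <;> omega

theorem bwCredit_step_other {N : ℕ} {st st' : BWState N} (C : BWVar N → Bool) {i k : Fin N}
    (h : bwStep st k st') (hki : k ≠ i) (hI : bwInv st) :
    bwCredit st' (bwCacheStep st C i k) i ≤ bwCredit st C i := by
  have hpc := (bwStep_frame h i hki.symm).2.2
  have hIi := hI i
  unfold bwCredit
  rw [hpc]
  cases hp : st.pc i <;> simp only [le_refl, Nat.add_le_add_iff_right] <;>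
    simp only [hp, bwLocalInv] at hIi <;>
    exact bwWaitCredit_step C _ h hki hI hIi.1 hIi.2.1

/-- Remote references of a step of `i` with cache `C`. -/
def bwRefs {N : ℕ} (st : BWState N) (C : BWVar N → Bool) (i : Fin N) : ℕ :=
  (bwWrites st i).card + ((bwReads st i).filter fun v => C v = false).card

theorem bwReads_filter_card_le {N : ℕ} (st : BWState N) (C : BWVar N → Bool) (i : Fin N) :
    ((bwReads st i).filter fun v => C v = false).card ≤ 2 := by
  refine (Finset.card_filter_le _ _).trans ?_
  unfold bwReads
  split <;> (try split_ifs) <;> simp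

/-- A busy-waiting step of `i` is paid by the credits it touches. -/
theorem bwWaitCredit_spin {N : ℕ} (st : BWState N) (C : BWVar N → Bool) {i : Fin N}
    {s : ℕ} {c : Color} {m j : ℕ} (hj : j < N) (hw : bwWrites st i = ∅)
    (h0 : (st.token ⟨j, hj⟩).session ≠ 0) (hs : (st.token ⟨j, hj⟩).session ≠ s)
    (hr : bwReads st i ⊆ {.gcolor, .token ⟨j, hj⟩, .choosing ⟨j, hj⟩})
    (hg : .gcolor ∈ bwReads st i → st.gcolor = c) :
    bwWaitCredit st (bwCacheStep st C i i) i s c m j + bwRefs st C i ≤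
      bwWaitCredit st C i s c m j := by
  have hcard : ((bwReads st i).filter fun v => C v = false).card =
      ∑ v ∈ ({.gcolor, .token ⟨j, hj⟩, .choosing ⟨j, hj⟩} : Finset (BWVar N)),
        if v ∈ bwReads st i ∧ C v = false then 1 else 0 := by
    rw [← Finset.card_filter, Finset.filter_and, Finset.filter_mem_eq_inter,
      Finset.inter_eq_right.mpr hr]
    congr 1
    ext v
    simp only [Finset.mem_filter, Finset.mem_inter]
    exact ⟨fun h => ⟨h.1, hr h.1, h.2⟩, fun h => ⟨h.1, h.2.2⟩⟩
  rw [Finset.sum_insert (by simp), Finset.sum_insert (by simp), Finset.sum_singleton] at hcard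
  unfold bwRefs bwWaitCredit bwPeerCredit bwColorCredit
  rw [hw, hcard]
  simp only [hj, dif_pos, h0, hs, or_self, if_false, bwCacheStep, hw, Finset.card_empty,
    Finset.notMem_empty, decide_false, decide_true, Bool.not_false, Bool.and_true, Bool.true_and]
  by_cases hg' : .gcolor ∈ bwReads st i
  · have := hg hg'
    cases C .gcolor <;> cases C (.token ⟨j, hj⟩) <;> cases C (.choosing ⟨j, hj⟩) <;>
      simp [hg', this] <;> split_ifs <;> omega
  · cases C .gcolor <;> cases C (.token ⟨j, hj⟩) <;> cases C (.choosing ⟨j, hj⟩) <;>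
      simp [hg'] <;> split_ifs <;> omega

theorem bwWaitCredit_same {N : ℕ} {st st' : BWState N} (C : BWVar N → Bool) {i : Fin N}
    {s : ℕ} {c : Color} {m : ℕ} (j : ℕ) (h : bwStep st i st') (hs : 0 < s)
    (hi : st.token i = ⟨s, some c, m⟩) (hw : bwWrites st i = ∅)
    (ht : st'.token = st.token) (hg : st'.gcolor = st.gcolor) :
    bwWaitCredit st' (bwCacheStep st C i i) i s c m j ≤ bwWaitCredit st C i s c m j := by
  have hset : ¬ bwSetsColor c (st.pc i) := by
    intro hx
    cases hp : st.pc i <;> simp_all [bwSetsColor, bwWrites]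
  have hA := bwWriters_step (i := i) (c := c) h (by rw [hi]; exact hs.ne') (by rw [hi])
  have hU := bwColorCredit_step i C c h
  rw [if_neg hset] at hA hU
  unfold bwWaitCredit
  by_cases hj : j < N
  · have hP : bwPeerCredit st' (bwCacheStep st C i i) i s c m ⟨j, hj⟩ ≤
        bwPeerCredit st C i s c m ⟨j, hj⟩ := by
      refine bwPeerCredit_of_le (by rw [ht]) (fun hne => ?_) (by rw [hg]; exact id)
        (bwCacheStep_le st C i i (by simp [hw])) (bwCacheStep_le st C i i (by simp [hw]))
      refine (bwStep_frame h _ fun hji => hne ?_).2.2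
      rw [hji, hi]
    simp only [hj, dif_pos]
    omega
  · simp only [hj, dif_neg, not_false_eq_true]
    omega

theorem bwWaitCredit_next {N : ℕ} {st st' : BWState N} (C : BWVar N → Bool) {i : Fin N}
    {s : ℕ} {c : Color} {m j : ℕ} (h : bwStep st i st') (hs : 0 < s)
    (hi : st.token i = ⟨s, some c, m⟩) (hw : bwWrites st i = ∅) (hj : j < N) :
    bwWaitCredit st' (bwCacheStep st C i i) i s c m (j + 1) + 5 ≤
      bwWaitCredit st C i s c m j := by
  have hset : ¬ bwSetsColor c (st.pc i) := by
    intro hx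
    cases hp : st.pc i <;> simp_all [bwSetsColor, bwWrites]
  have hA := bwWriters_step (i := i) (c := c) h (by rw [hi]; exact hs.ne') (by rw [hi])
  have hU := bwColorCredit_step i C c h
  rw [if_neg hset] at hA hU
  unfold bwWaitCredit
  have hP : (if h : j + 1 < N then
      bwPeerCredit st' (bwCacheStep st C i i) i s c m ⟨j + 1, h⟩ else 0) ≤ 9 := by
    split_ifs
    · exact bwPeerCredit_le ..
    · omega
  omega

theorem bwCredit_step_self {N : ℕ} {st st' : BWState N} (C : BWVar N → Bool) {i : Fin N}
    (h : bwStep st i st') (hI : bwInv st) (hr : st.pc i ≠ .remainder) :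
    bwCredit st' (bwCacheStep st C i i) i + bwRefs st C i ≤ bwCredit st C i := by
  have hIi := hI i
  have hrefs := bwReads_filter_card_le st C i
  have hone : ∀ v, ((({v} : Finset (BWVar N)).filter fun v => C v = false).card ≤ 1) :=
    fun v => (Finset.card_filter_le _ _).trans (by simp)
  have hstep := h
  unfold bwStep at h
  split at h <;> rename_i hp
  · exact absurd hp hr
  · subst h; simp [bwCredit, hp, bwRefs, bwReads, bwWrites]
  · subst h; simp [bwCredit, hp, bwRefs, bwReads, bwWrites]
  · subst h
    have := hone .gcolor
    simp [bwCredit, hp, bwRefs, bwReads, bwWrites]; omega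
  · split_ifs at h with hj hc
    · subst h
      have := hone (.token ⟨_, hj⟩)
      simp [bwCredit, hp, bwRefs, bwReads, bwWrites, hj]; omega
    · subst h
      have := hone (.token ⟨_, hj⟩)
      simp [bwCredit, hp, bwRefs, bwReads, bwWrites, hj]; omega
    · subst h; simp [bwCredit, hp, bwRefs, bwReads, bwWrites, hj]; omega
  · subst h; simp [bwCredit, hp, bwRefs, bwReads, bwWrites]
  · rename_i s c m
    have := bwWaitCredit_le st' (bwCacheStep st C i i) i s c m 0
    subst h; simp [bwCredit, hp, bwRefs, bwReads, bwWrites]; omega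
  · rename_i s c m j
    rw [hp] at hIi
    have hw : bwWrites st i = ∅ := by simp [bwWrites, hp]
    split_ifs at h with hj hc
    · have := bwWaitCredit_same C j hstep hIi.1 hIi.2.1 hw (by rw [h]) (by rw [h])
      have hp' : st'.pc i = .wB s c m j := by rw [h]; simp
      simp only [bwCredit, hp, hp', bwRefs, hw, Finset.card_empty]
      omega
    · obtain ⟨hc1, hc2⟩ := not_or.mp hc
      have h0 : (st.token ⟨j, hj⟩).session ≠ 0 := by
        have hIj := hI ⟨j, hj⟩
        intro hz
        cases hq : st.pc ⟨j, hj⟩ <;> simp_all [bwLocalInv] <;> omega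
      have := bwWaitCredit_spin st C (s := s) (c := c) (m := m) (i := i) hj hw h0 hc2
        (by simp [bwReads, hp, hj, Finset.insert_subset_iff])
        (by simp [bwReads, hp, hj])
      subst h
      simp only [bwCredit, hp]
      omega
    · have hp' : st'.pc i = .cs s c m := by rw [h]; simp
      simp [bwCredit, hp, hp', bwRefs, hw, bwReads, hj, bwWaitCredit]
      omega
  · rename_i s c m j
    rw [hp] at hIi
    have hw : bwWrites st i = ∅ := by simp [bwWrites, hp]
    split_ifs at h with hj hc
    · have := bwWaitCredit_same C j hstep hIi.1 hIi.2.1 hw (by rw [h]) (by rw [h])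
      have hp' : st'.pc i = .wSame s c m j := by rw [h]; simp
      have := hone (.token ⟨_, hj⟩)
      simp only [bwCredit, hp, hp', bwRefs, hw, Finset.card_empty, bwReads, hj, dif_pos]
      omega
    · have := bwWaitCredit_same C j hstep hIi.1 hIi.2.1 hw (by rw [h]) (by rw [h])
      have hp' : st'.pc i = .wDiff s c m j := by rw [h]; simp
      have := hone (.token ⟨_, hj⟩)
      simp only [bwCredit, hp, hp', bwRefs, hw, Finset.card_empty, bwReads, hj, dif_pos]
      omega
    · have := bwWaitCredit_same C j hstep hIi.1 hIi.2.1 hw (by rw [h]) (by rw [h])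
      subst h
      simpa [bwCredit, hp, bwRefs, hw, bwReads, hj] using this
  · rename_i s c m j
    rw [hp] at hIi
    have hw : bwWrites st i = ∅ := by simp [bwWrites, hp]
    split_ifs at h with hj hc
    · have := bwWaitCredit_next C hstep hIi.1 hIi.2.1 hw hj
      have hp' : st'.pc i = .w1 s c m (j + 1) := by rw [h]; simp
      simp only [bwCredit, hp, hp', bwRefs, hw, Finset.card_empty]
      omega
    · push Not at hc
      have := bwWaitCredit_spin st C (s := s) (c := c) (m := m) (i := i) hj hw hc.2.2.1 hc.2.2.2
        (by simp [bwReads, hp, hj]) (by simp [bwReads, hp, hj])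
      subst h
      simp only [bwCredit, hp]
      omega
    · have := bwWaitCredit_same C j hstep hIi.1 hIi.2.1 hw (by rw [h]) (by rw [h])
      subst h
      simpa [bwCredit, hp, bwRefs, hw, bwReads, hj] using this
  · rename_i s c m j
    rw [hp] at hIi
    have hw : bwWrites st i = ∅ := by simp [bwWrites, hp]
    split_ifs at h with hj hc
    · have := bwWaitCredit_next C hstep hIi.1 hIi.2.1 hw hj
      have hp' : st'.pc i = .w1 s c m (j + 1) := by rw [h]; simp
      simp only [bwCredit, hp, hp', bwRefs, hw, Finset.card_empty]
      omega
    · push Not at hc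
      have := bwWaitCredit_spin st C (s := s) (c := c) (m := m) (i := i) hj hw hc.2.2.1 hc.2.2.2
        (by simp [bwReads, hp, hj, Finset.insert_subset_iff]) (fun _ => hc.1)
      subst h
      simp only [bwCredit, hp]
      omega
    · have := bwWaitCredit_same C j hstep hIi.1 hIi.2.1 hw (by rw [h]) (by rw [h])
      subst h
      simpa [bwCredit, hp, bwRefs, hw, bwReads, hj] using this
  · rcases h with rfl | rfl
    · simp [bwCredit, hp, bwRefs, bwReads, bwWrites]
    · split_ifs <;> simp [bwCredit, hp, bwRefs, bwReads, bwWrites] <;> omega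
  · split_ifs at h with hj hc
    · subst h
      have := hone (.token ⟨_, hj⟩)
      simp [bwCredit, hp, bwRefs, bwReads, bwWrites, hj]; omega
    · subst h
      have := hone (.token ⟨_, hj⟩)
      simp [bwCredit, hp, bwRefs, bwReads, bwWrites, hj]; omega
    · subst h
      simp [bwCredit, hp, bwRefs, bwReads, bwWrites, hj]; omega
  · subst h; simp [bwCredit, hp, bwRefs, bwReads, bwWrites]
  · subst h; simp [bwCredit, hp, bwRefs, bwReads, bwWrites]

theorem bwCached_succ {N : ℕ} (e : BWExec N) (n : ℕ) (i : Fin N) :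
    bwCached e (n + 1) i = bwCacheStep (e.state n) (bwCached e n i) i (e.sched n) := by
  funext v
  by_cases h : e.sched n = i <;> simp [bwCached, bwCacheStep, h]

theorem bwCredit_step {N : ℕ} (e : BWExec N) (i : Fin N) (n : ℕ)
    (hr : (e.state n).pc i ≠ .remainder) :
    bwCredit (e.state (n + 1)) (bwCached e (n + 1) i) i +
        (if e.sched n = i then bwStepRMR e n else 0) ≤
      bwCredit (e.state n) (bwCached e n i) i := by
  rw [bwCached_succ]
  split_ifs with h
  · have := bwCredit_step_self (bwCached e n i) (h ▸ e.step n) (e.inv n) hr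
    simpa [bwRefs, bwStepRMR, h] using this
  · exact bwCredit_step_other _ (e.step n) h (e.inv n)

/-- **O(N) RMR complexity of the BWBGME algorithm in the CC model.**  There is a constant
`c` such that in every execution with any number `N` of processes, every single
invocation by a process `i` — entered at step `a` (leaving the remainder section) and
completed at step `b` (returning to the remainder section), staying outside the remainder
section in between — incurs at most `c * N` remote memory references. -/
theorem bw_rmr_linear :
    ∃ c : ℕ, ∀ (N : ℕ) (e : BWExec N) (i : Fin N) (a b : ℕ),
      (e.state a).pc i = BWPc.remainder →
      (e.state (a + 1)).pc i ≠ BWPc.remainder →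
      bwCompletesExit e i b →
      a < b →
      bwActiveThrough e i a b →
      (∑ k ∈ Finset.Icc a b, if e.sched k = i then bwStepRMR e k else 0) ≤ c * N := by
  refine ⟨50, fun N e i a b ha ha1 _ hab hact => ?_⟩
  have hN : 0 < N := i.pos
  have key : ∀ n, a + 1 ≤ n → n ≤ b + 1 →
      bwCredit (e.state n) (bwCached e n i) i +
          ∑ k ∈ Finset.Ico (a + 1) n, (if e.sched k = i then bwStepRMR e k else 0) ≤
        bwCredit (e.state (a + 1)) (bwCached e (a + 1) i) i := by
    intro n hn
    induction n, hn using Nat.le_induction with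
    | base => simp
    | succ n hn ih =>
      intro hb
      have h1 := bwCredit_step e i n (hact n (by omega) (by omega))
      have h2 := ih (by omega)
      rw [Finset.sum_Ico_succ_top hn]
      omega
  have hstart : bwCredit (e.state (a + 1)) (bwCached e (a + 1) i) i = 24 * N + 26 := by
    have hs := e.step a
    by_cases hk : e.sched a = i
    · rw [hk] at hs
      simp only [bwStep, ha] at hs
      rcases hs with hs | ⟨s, _, hs⟩
      · rw [hs] at ha1
        exact absurd ha ha1
      · simp [bwCredit, hs]
    · rw [(bwStep_frame hs i fun h => hk h.symm).2.2] at ha1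
      exact absurd ha ha1
  have hfirst : (if e.sched a = i then bwStepRMR e a else 0) = 0 := by
    split_ifs with hk
    · simp [bwStepRMR, hk, bwWrites, bwReads, ha]
    · rfl
  have hend := key (b + 1) (by omega) le_rfl
  rw [← Finset.Ico_add_one_right_eq_Icc, Finset.sum_eq_sum_Ico_succ_bot (by omega), hfirst]
  omega
end
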